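/- Let V be a random variable with {γ = 0} ⊆ {V = 0} and E(|V|·1_{γ≤t}) < ∞ for every t ∈ 𝒯. Let K : 𝒯 → ℝ be a Borel function with E(V·1_{γ≤t}) = ∫_{[0,t]} K(s) dG(s) for all t ∈ 𝒯 (i.e. K(t) = E[V | γ = t]), and define F(t) = ∫_{(0,t]} Ḡ(s−)⁻¹ K(s) dG(s) for 0 ≤ t < t_G, and in Case B F(t_G) = lim_{t↑t_G} F(t). Define A_t = F(t∧γ) in Case A, and A_t = F(t∧γ) + K(t_G)·1_{γ≥t_G}·1_{t≥t_G} in Case B. Then the process M = A − X, where X_t = V·1_{t≥γ}, is a local martingale with respect to 𝔽 (so that A is the compensator of the single jump process X). -/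

import Mathlib

open MeasureTheory Filter Set Topology
open scoped ENNReal NNReal Classical

noncomputable section

namespace SingleJump

variable {Ω : Type*}

/-- The event `{γ > t}`. -/
def jumpSet (γ : Ω → ℝ≥0∞) (t : ℝ≥0) : Set Ω := {ω | (t : ℝ≥0∞) < γ ω}

/-- The collection `𝒻_t` of the single jump filtration generated by `γ` and the σ-field `m`:
`A ∈ 𝒻_t` iff `A` is `m`-measurable and `A ∩ {γ > t}` is either `∅` or `{γ > t}`. -/
def jumpColl (m : MeasurableSpace Ω) (γ : Ω → ℝ≥0∞) (t : ℝ≥0) : Set (Set Ω) :=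
  {A | MeasurableSet[m] A ∧ (A ∩ jumpSet γ t = ∅ ∨ A ∩ jumpSet γ t = jumpSet γ t)}

/-- `𝒻_t` as a σ-field (the collection `jumpColl` generates itself, see Proposition 1(i)). -/
def jumpσ (m : MeasurableSpace Ω) (γ : Ω → ℝ≥0∞) (t : ℝ≥0) : MeasurableSpace Ω :=
  MeasurableSpace.generateFrom (jumpColl m γ t)

/-- `𝒻_∞ = σ(⋃_{t ∈ ℝ₊} 𝒻_t)`. -/
def jumpσInf (m : MeasurableSpace Ω) (γ : Ω → ℝ≥0∞) : MeasurableSpace Ω :=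
  ⨆ t : ℝ≥0, jumpσ m γ t

/-- A real function on `ℝ≥0` is càdlàg: right-continuous everywhere, finite left limits. -/
def Cadlag (f : ℝ≥0 → ℝ) : Prop :=
  (∀ t, ContinuousWithinAt f (Ici t) t) ∧
    ∀ t : ℝ≥0, 0 < t → ∃ c : ℝ, Tendsto f (𝓝[<] t) (𝓝 c)

/-- The filter of times `t ∈ ℝ≥0` with `t ↑ a` strictly from the left (this is `atTop`
when `a = ∞`). -/
def leftF (a : ℝ≥0∞) : Filter ℝ≥0 := Filter.comap (fun t : ℝ≥0 => (t : ℝ≥0∞)) (𝓝[<] a)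

/-- Total variation of `f` over `[0,∞)`, including `|f 0|` (the paper's convention `Var`). -/
def totalVar (f : ℝ≥0 → ℝ) : ℝ≥0∞ := (‖f 0‖₊ : ℝ≥0∞) + eVariationOn f Set.univ

/-- The process `M` stopped at the (possibly infinite) random time `T`. -/
def stopped (M : ℝ≥0 → Ω → ℝ) (T : Ω → ℝ≥0∞) : ℝ≥0 → Ω → ℝ :=
  fun t ω => M (((t : ℝ≥0∞) ⊓ T ω).toNNReal) ω

section WithMeasurableSpace

variable [m : MeasurableSpace Ω]

/-- `Ḡ(t) = 1 - G(t) = P(γ > t)`. -/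
def Gbar (μ : Measure Ω) (γ : Ω → ℝ≥0∞) (t : ℝ≥0) : ℝ :=
  (μ {ω | (t : ℝ≥0∞) < γ ω}).toReal

/-- `Ḡ(t-) = P(γ ≥ t)`, the left-hand limit of `Ḡ` at `t`. -/
def GbarLeft (μ : Measure Ω) (γ : Ω → ℝ≥0∞) (t : ℝ≥0) : ℝ :=
  (μ {ω | (t : ℝ≥0∞) ≤ γ ω}).toReal

/-- `t_G = sup {t ∈ ℝ₊ : G(t) < 1}`, the right endpoint of the law of `γ`. -/
def tG (μ : Measure Ω) (γ : Ω → ℝ≥0∞) : ℝ≥0∞ :=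
  sSup ((fun t : ℝ≥0 => (t : ℝ≥0∞)) '' {t : ℝ≥0 | μ {ω | γ ω ≤ (t : ℝ≥0∞)} < 1})

/-- `𝒯 = {t ∈ ℝ₊ : P(γ ≥ t) > 0}`. -/
def TT (μ : Measure Ω) (γ : Ω → ℝ≥0∞) : Set ℝ≥0 :=
  {t | 0 < μ {ω | (t : ℝ≥0∞) ≤ γ ω}}

/-- Case A: `P(γ = t_G < ∞) = 0`. -/
def CaseA (μ : Measure Ω) (γ : Ω → ℝ≥0∞) : Prop :=
  μ {ω | γ ω = tG μ γ ∧ tG μ γ < ⊤} = 0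

/-- Case B: `P(γ = t_G < ∞) > 0`. -/
def CaseB (μ : Measure Ω) (γ : Ω → ℝ≥0∞) : Prop :=
  0 < μ {ω | γ ω = tG μ γ ∧ tG μ γ < ⊤}

/-- `z ∈ L¹_loc(dG)` : `z` is Borel and `∫_{[0,t]} |z(s)| dG(s) < ∞` for every `t ∈ 𝒯`,
where `dG` is the law of `γ` (a measure on `[0,∞]`). -/
def MemL1loc (μ : Measure Ω) (γ : Ω → ℝ≥0∞) (z : ℝ≥0 → ℝ) : Prop :=
  Measurable z ∧ ∀ t ∈ TT μ γ,
    IntegrableOn (fun x : ℝ≥0∞ => z x.toNNReal) (Icc 0 (t : ℝ≥0∞)) (μ.map γ)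

/-- `F loc≪ G` with density `z = dF/dG` : `F(t) = F(0) + ∫_(0,t] z(s) dG(s)` for `t < t_G`. -/
def LocAC (μ : Measure Ω) (γ : Ω → ℝ≥0∞) (F z : ℝ≥0 → ℝ) : Prop :=
  MemL1loc μ γ z ∧ ∀ t : ℝ≥0, (t : ℝ≥0∞) < tG μ γ →
    F t = F 0 + ∫ x in Ioc (0 : ℝ≥0∞) (t : ℝ≥0∞), z x.toNNReal ∂(μ.map γ)

/-- Condition M for the pair `(F, H)`. -/
def CondM (μ : Measure Ω) (γ : Ω → ℝ≥0∞) (F H : ℝ≥0 → ℝ) : Prop :=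
  (∃ z, LocAC μ γ F z) ∧ MemL1loc μ γ H ∧
  (∀ t : ℝ≥0, (t : ℝ≥0∞) < tG μ γ →
    F t * Gbar μ γ t + ∫ x in Ioc (0 : ℝ≥0∞) (t : ℝ≥0∞), H x.toNNReal ∂(μ.map γ)
      = F 0 * Gbar μ γ 0) ∧
  (CaseB μ γ → Tendsto F (leftF (tG μ γ)) (𝓝 (H (tG μ γ).toNNReal)))

/-- A stopping time of the single jump filtration: `{T ≤ t} ∈ 𝒻_t` for all `t ∈ ℝ₊`. -/
def IsSJStoppingTime (γ : Ω → ℝ≥0∞) (T : Ω → ℝ≥0∞) : Prop :=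
  ∀ t : ℝ≥0, {ω | T ω ≤ (t : ℝ≥0∞)} ∈ jumpColl m γ t

/-- The martingale property on a set `S` of times, w.r.t. the single jump filtration. -/
def MartingaleOn (μ : Measure Ω) (γ : Ω → ℝ≥0∞) (M : ℝ≥0 → Ω → ℝ) (S : Set ℝ≥0) : Prop :=
  (∀ t ∈ S, Measurable[jumpσ m γ t] (M t)) ∧ (∀ t ∈ S, Integrable (M t) μ) ∧
    ∀ s ∈ S, ∀ t ∈ S, s ≤ t → μ[M t|jumpσ m γ s] =ᵐ[μ] M s

/-- A uniformly integrable martingale w.r.t. the single jump filtration. -/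
def UIMartingale (μ : Measure Ω) (γ : Ω → ℝ≥0∞) (M : ℝ≥0 → Ω → ℝ) : Prop :=
  MartingaleOn μ γ M Set.univ ∧ UniformIntegrable M 1 μ

/-- A local martingale w.r.t. the single jump filtration: adapted, a.s. càdlàg paths, and
there are stopping times `T n ↑ ∞` a.s. with each stopped process a UI martingale. -/
def LocalMartingale (μ : Measure Ω) (γ : Ω → ℝ≥0∞) (M : ℝ≥0 → Ω → ℝ) : Prop :=
  (∀ t : ℝ≥0, Measurable[jumpσ m γ t] (M t)) ∧
  (∀ᵐ ω ∂μ, Cadlag fun t => M t ω) ∧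
  ∃ T : ℕ → Ω → ℝ≥0∞,
    (∀ n, IsSJStoppingTime γ (T n)) ∧
    (∀ᵐ ω ∂μ, Monotone (fun n => T n ω) ∧ Tendsto (fun n => T n ω) atTop (𝓝 (⊤ : ℝ≥0∞))) ∧
    ∀ n, UIMartingale μ γ (stopped M (T n))

/-- `E[L' | γ] = 0` for a (possibly only locally integrable) random variable `L'`. -/
def CondZeroGivenGamma (μ : Measure Ω) (γ : Ω → ℝ≥0∞) (L' : Ω → ℝ) : Prop :=
  ∀ B : Set ℝ≥0∞, MeasurableSet B → IntegrableOn L' (γ ⁻¹' B) μ →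
    ∫ ω in γ ⁻¹' B, L' ω ∂μ = 0

/-!
A single function of `t ∧ γ` encodes both cases of the compensator: the extra term of Case B is the
mass that `Ḡ(s−)⁻¹ K(s) dG(s)` puts on `{t_G}`, because `Ḡ(t_G−) = P(γ = t_G)`. Hence on `𝒯` the
compensator is `Λ(t ∧ γ)` with `Λ(t) = ∫_(0,t] Ḡ(s−)⁻¹ K(s) dG(s)`. By Fubini, for `s ≤ r` in `𝒯`,
`E[(Λ(r ∧ γ) − Λ(s)) 1_{γ > s}] = ∫_(s,r] P(γ ≥ y) Ḡ(y−)⁻¹ K(y) dG(y) = E[V 1_{s < γ ≤ r}]`.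
As `{γ > s}` is an atom of `𝒻_s` and the process no longer moves after `γ`, this single identity is
the martingale property on `𝒯`. Almost surely `t ∧ γ` never leaves `𝒯`, so freezing the process at
deterministic times exhausting `𝒯`, unless the jump has already occurred, localizes it.
-/

lemma coe_toNNReal_coe_inf (t : ℝ≥0) (x : ℝ≥0∞) :
    (((t : ℝ≥0∞) ⊓ x).toNNReal : ℝ≥0∞) = (t : ℝ≥0∞) ⊓ x :=
  ENNReal.coe_toNNReal (ne_top_of_le_ne_top ENNReal.coe_ne_top inf_le_left)

section SetIntegrals

variable {α E : Type*} [MeasurableSpace α] {ν : Measure α} [NormedAddCommGroup E]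
  [NormedSpace ℝ E] {f : α → E}

lemma tendsto_setIntegral_of_forall_eventually_mem_iff {ι : Type*} {l : Filter ι}
    [l.IsCountablyGenerated] {S : ι → Set α} {T B : Set α} (hf : IntegrableOn f B ν)
    (hS : ∀ i, MeasurableSet (S i)) (hT : MeasurableSet T) (hSB : ∀ᶠ i in l, S i ⊆ B)
    (hST : ∀ x, ∀ᶠ i in l, (x ∈ S i ↔ x ∈ T)) :
    Tendsto (fun i => ∫ x in S i, f x ∂ν) l (𝓝 (∫ x in T, f x ∂ν)) := by
  obtain rfl | _ := l.eq_or_neBot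
  · exact tendsto_bot
  have hTB : T ⊆ B := fun x hx =>
    let ⟨_, hiB, hi⟩ := (hSB.and (hST x)).exists
    hiB (hi.2 hx)
  rw [← integral_indicator hT, ← setIntegral_eq_integral_of_forall_compl_eq_zero
    fun x hx => indicator_of_notMem (fun hxT => hx (hTB hxT)) f]
  have hcongr : (fun i => ∫ x in B, (S i).indicator f x ∂ν) =ᶠ[l]
      fun i => ∫ x in S i, f x ∂ν := by
    filter_upwards [hSB] with i hi
    rw [setIntegral_indicator (hS i), inter_eq_right.2 hi]
  refine Tendsto.congr' hcongr (tendsto_integral_filter_of_dominated_convergence (fun x => ‖f x‖)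
    (.of_forall fun i => hf.aestronglyMeasurable.indicator (hS i))
    (.of_forall fun i => .of_forall fun x => norm_indicator_le_norm_self f x) hf.norm
    (.of_forall fun x => tendsto_const_nhds.congr' ?_))
  filter_upwards [hST x] with i hi
  exact indicator_eq_indicator hi.symm rfl

lemma setIntegral_setIntegral_Ioc_min [CompleteSpace E] {β : Type*} [LinearOrder β]
    [TopologicalSpace β] [OrderClosedTopology β] [SecondCountableTopology β] [MeasurableSpace β]
    [BorelSpace β] {μ : Measure α} [IsFiniteMeasure μ] {γ : α → β} (hγ : Measurable γ)
    {ν : Measure β} [SFinite ν] {k : β → E} {s r : β} (hk : IntegrableOn k (Ioc s r) ν) :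
    ∫ ω in {ω | s < γ ω}, ∫ y in Ioc s (r ⊓ γ ω), k y ∂ν ∂μ
      = ∫ y in Ioc s r, μ.real {ω | y ≤ γ ω} • k y ∂ν := by
  have hle : MeasurableSet {p : α × β | p.2 ≤ γ p.1} :=
    measurableSet_le measurable_snd (hγ.comp measurable_fst)
  have hprod : Integrable (Function.uncurry fun ω y => (Iic (γ ω)).indicator k y)
      ((μ.restrict {ω | s < γ ω}).prod (ν.restrict (Ioc s r))) :=
    (hk.integrable.comp_snd _).indicator hle
  have hinner : ∀ ω, ∫ y in Ioc s (r ⊓ γ ω), k y ∂ν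
      = ∫ y in Ioc s r, (Iic (γ ω)).indicator k y ∂ν := fun ω => by
    rw [setIntegral_indicator measurableSet_Iic, Ioc_inter_Iic]
  simp_rw [hinner]
  rw [integral_integral_swap hprod]
  refine setIntegral_congr_fun measurableSet_Ioc fun y hy => ?_
  have hsub : {ω | y ≤ γ ω} ⊆ {ω | s < γ ω} := fun ω hω => hy.1.trans_le hω
  calc ∫ ω in {ω | s < γ ω}, (Iic (γ ω)).indicator k y ∂μ
      = ∫ ω in {ω | s < γ ω}, {ω | y ≤ γ ω}.indicator (fun _ => k y) ω ∂μ := rfl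
    _ = μ.real {ω | y ≤ γ ω} • k y := by
        rw [setIntegral_indicator (measurableSet_le measurable_const hγ),
          inter_eq_right.2 hsub, setIntegral_const]

end SetIntegrals

section Cadlag

/-- The single jump process `X_t = V·1_{t ≥ γ}`. -/
def singleJump (γ : Ω → ℝ≥0∞) (V : Ω → ℝ) (t : ℝ≥0) (ω : Ω) : ℝ :=
  if (t : ℝ≥0∞) < γ ω then 0 else V ω

omit m in
lemma singleJump_eq_indicator (γ : Ω → ℝ≥0∞) (V : Ω → ℝ) (t : ℝ≥0) :
    singleJump γ V t = {ω | γ ω ≤ t}.indicator V := by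
  ext ω
  by_cases hω : γ ω ≤ t <;> simp [singleJump, hω, not_le.1, not_lt.2]

lemma Cadlag.sub {f g : ℝ≥0 → ℝ} (hf : Cadlag f) (hg : Cadlag g) :
    Cadlag fun t => f t - g t :=
  ⟨fun t => (hf.1 t).sub (hg.1 t), fun t ht =>
    let ⟨a, ha⟩ := hf.2 t ht
    let ⟨b, hb⟩ := hg.2 t ht
    ⟨a - b, ha.sub hb⟩⟩

omit m in
lemma cadlag_singleJump (γ : Ω → ℝ≥0∞) (V : Ω → ℝ) (ω : Ω) :
    Cadlag fun t => singleJump γ V t ω := by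
  have hcoe : Continuous ((↑) : ℝ≥0 → ℝ≥0∞) := ENNReal.continuous_coe
  refine ⟨fun t => ?_, fun t _ => ?_⟩
  · refine tendsto_const_nhds.congr' ?_
    rcases lt_or_ge (t : ℝ≥0∞) (γ ω) with h | h
    · filter_upwards [nhdsWithin_le_nhds (hcoe.continuousAt.eventually_lt_const h)] with u hu
      rw [singleJump, singleJump, if_pos h, if_pos hu]
    · filter_upwards [self_mem_nhdsWithin] with u (hu : t ≤ u)
      have hγu : γ ω ≤ u := h.trans (by exact_mod_cast hu)
      rw [singleJump, singleJump, if_neg h.not_gt, if_neg hγu.not_gt]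
  · rcases le_or_gt (t : ℝ≥0∞) (γ ω) with h | h
    · refine ⟨0, tendsto_const_nhds.congr' ?_⟩
      filter_upwards [self_mem_nhdsWithin] with u (hu : u < t)
      exact (if_pos (lt_of_lt_of_le (by exact_mod_cast hu) h)).symm
    · refine ⟨V ω, tendsto_const_nhds.congr' ?_⟩
      filter_upwards [nhdsWithin_le_nhds (hcoe.continuousAt.eventually_const_lt h)] with u hu
      exact (if_neg hu.not_gt).symm

variable {ν : Measure ℝ≥0∞} {k : ℝ≥0∞ → ℝ}

lemma cadlag_setIntegral_Ioc_min {x : ℝ≥0∞}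
    (hk : ∀ t : ℝ≥0, IntegrableOn k (Ioc 0 ((t : ℝ≥0∞) ⊓ x)) ν) :
    Cadlag fun t => ∫ y in Ioc 0 ((t : ℝ≥0∞) ⊓ x), k y ∂ν := by
  have hcoe : Continuous ((↑) : ℝ≥0 → ℝ≥0∞) := ENNReal.continuous_coe
  refine ⟨fun t => ?_, fun t _ => ⟨∫ y in Ioc 0 x ∩ Iio (t : ℝ≥0∞), k y ∂ν, ?_⟩⟩
  · refine tendsto_setIntegral_of_forall_eventually_mem_iff (hk (t + 1))
      (fun _ => measurableSet_Ioc) measurableSet_Ioc ?_ fun y => ?_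
    · filter_upwards [nhdsWithin_le_nhds (Iio_mem_nhds (lt_add_one t))] with u (hu : u < t + 1)
      exact Ioc_subset_Ioc_right (inf_le_inf_right _ (by exact_mod_cast hu.le))
    · rcases le_or_gt y t with hy | hy
      · filter_upwards [self_mem_nhdsWithin] with u (hu : t ≤ u)
        have hyu : y ≤ u := hy.trans (by exact_mod_cast hu)
        simp [hy, hyu]
      · filter_upwards [nhdsWithin_le_nhds (hcoe.continuousAt.eventually_lt_const hy)] with u hu
        simp [hy.not_ge, hu.not_ge]
  · refine tendsto_setIntegral_of_forall_eventually_mem_iff (hk t)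
      (fun _ => measurableSet_Ioc) (measurableSet_Ioc.inter measurableSet_Iio) ?_ fun y => ?_
    · filter_upwards [self_mem_nhdsWithin] with u (hu : u < t)
      exact Ioc_subset_Ioc_right (inf_le_inf_right _ (by exact_mod_cast hu.le))
    · rcases lt_or_ge y t with hy | hy
      · filter_upwards [nhdsWithin_le_nhds (hcoe.continuousAt.eventually_const_lt hy)] with u hu
        simp [hy, hu.le]
      · filter_upwards [self_mem_nhdsWithin] with u (hu : u < t)
        have huy : (u : ℝ≥0∞) < y := lt_of_lt_of_le (by exact_mod_cast hu) hy
        simp [hy.not_gt, huy.not_ge]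

lemma tendsto_setIntegral_Ioc_leftF {a : ℝ≥0∞} (hk : IntegrableOn k (Ioo 0 a) ν) :
    Tendsto (fun u : ℝ≥0 => ∫ y in Ioc 0 (u : ℝ≥0∞), k y ∂ν) (leftF a)
      (𝓝 (∫ y in Ioo 0 a, k y ∂ν)) := by
  have hlt : Tendsto (fun x : ℝ≥0∞ => ∫ y in Ioc 0 x, k y ∂ν) (𝓝[<] a)
      (𝓝 (∫ y in Ioo 0 a, k y ∂ν)) := by
    refine tendsto_setIntegral_of_forall_eventually_mem_iff hk
      (fun _ => measurableSet_Ioc) measurableSet_Ioo ?_ fun y => ?_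
    · filter_upwards [self_mem_nhdsWithin] with x (hx : x < a)
      exact fun y hy => ⟨hy.1, hy.2.trans_lt hx⟩
    · rcases lt_or_ge y a with hy | hy
      · filter_upwards [Ioo_mem_nhdsLT hy] with x hx
        simp [hy, hx.1.le]
      · filter_upwards [self_mem_nhdsWithin] with x (hx : x < a)
        simp [hy.not_gt, (hx.trans_le hy).not_ge]
  exact hlt.comp tendsto_comap

lemma leftF_neBot {a : ℝ≥0∞} (ha : 0 < a) : (leftF a).NeBot := by
  have : (𝓝[<] a).NeBot := nhdsLT_neBot_of_exists_lt ⟨0, ha⟩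
  refine comap_neBot_iff_frequently.2 (Eventually.frequently ?_)
  filter_upwards [self_mem_nhdsWithin] with x hx
  exact ⟨x.toNNReal, ENNReal.coe_toNNReal (ne_top_of_lt hx)⟩

end Cadlag

section Filtration

variable {γ : Ω → ℝ≥0∞}

lemma mem_jumpColl_iff {t : ℝ≥0} {B : Set Ω} :
    B ∈ jumpColl m γ t ↔
      MeasurableSet B ∧ (Disjoint B (jumpSet γ t) ∨ jumpSet γ t ⊆ B) := by
  rw [jumpColl, mem_ofPred_eq, inter_eq_right, disjoint_iff_inter_eq_empty]

lemma measurableSet_jumpσ_iff {t : ℝ≥0} {B : Set Ω} :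
    MeasurableSet[jumpσ m γ t] B ↔ B ∈ jumpColl m γ t := by
  refine ⟨fun hB => ?_, fun hB => MeasurableSpace.measurableSet_generateFrom hB⟩
  induction B, hB using MeasurableSpace.generateFrom_induction with
  | hC _ hB _ => exact hB
  | empty => exact mem_jumpColl_iff.2 ⟨.empty, .inl (empty_disjoint _)⟩
  | compl B _ ih =>
    obtain ⟨hB, hdisj | hsub⟩ := mem_jumpColl_iff.1 ih
    · exact mem_jumpColl_iff.2 ⟨hB.compl, .inr hdisj.symm.subset_compl_right⟩
    · exact mem_jumpColl_iff.2 ⟨hB.compl, .inl (disjoint_compl_left_iff_subset.2 hsub)⟩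
  | iUnion B _ ih =>
    simp only [mem_jumpColl_iff] at ih ⊢
    refine ⟨.iUnion fun n => (ih n).1, ?_⟩
    by_cases hsub : ∃ n, jumpSet γ t ⊆ B n
    · obtain ⟨n, hn⟩ := hsub
      exact .inr (hn.trans (subset_iUnion B n))
    · exact .inl (disjoint_iUnion_left.2 fun n => (ih n).2.resolve_right fun h => hsub ⟨n, h⟩)

lemma jumpσ_le (γ : Ω → ℝ≥0∞) (t : ℝ≥0) : jumpσ m γ t ≤ m :=
  fun _ hB => (measurableSet_jumpσ_iff.1 hB).1

omit m in
lemma jumpSet_anti (γ : Ω → ℝ≥0∞) : Antitone (jumpSet γ) :=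
  fun _ _ hst _ hω => (ENNReal.coe_le_coe.2 hst).trans_lt hω

lemma jumpσ_mono (γ : Ω → ℝ≥0∞) : Monotone (jumpσ m γ) := by
  intro s t hst B hB
  rw [measurableSet_jumpσ_iff, mem_jumpColl_iff] at hB ⊢
  exact ⟨hB.1, hB.2.imp (fun h => h.mono_right (jumpSet_anti γ hst)) (jumpSet_anti γ hst).trans⟩

lemma measurableSet_jumpSet (hγ : Measurable γ) (t : ℝ≥0) : MeasurableSet (jumpSet γ t) :=
  measurableSet_lt measurable_const hγ

lemma measurable_jumpσ_of_eqOn_jumpSet {β : Type*} [MeasurableSpace β] {t : ℝ≥0} {f : Ω → β}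
    {c : β} (hf : Measurable f) (hc : ∀ ω ∈ jumpSet γ t, f ω = c) :
    Measurable[jumpσ m γ t] f := by
  intro B hB
  refine measurableSet_jumpσ_iff.2 (mem_jumpColl_iff.2 ⟨hf hB, ?_⟩)
  by_cases hcB : c ∈ B
  · exact .inr fun ω hω => mem_preimage.2 (hc ω hω ▸ hcB)
  · exact .inl (disjoint_left.2 fun ω hωB hω => hcB (hc ω hω ▸ hωB))

variable {μ : Measure Ω} [IsFiniteMeasure μ]

lemma condExp_jumpσ_ae_eq (hγ : Measurable γ) {s : ℝ≥0} {f g : Ω → ℝ} (hf : Integrable f μ)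
    (hg : Integrable g μ) (hg_meas : Measurable[jumpσ m γ s] g)
    (hfg : EqOn f g (jumpSet γ s)ᶜ)
    (hint : ∫ ω in jumpSet γ s, f ω ∂μ = ∫ ω in jumpSet γ s, g ω ∂μ) :
    μ[f|jumpσ m γ s] =ᵐ[μ] g := by
  refine (ae_eq_condExp_of_forall_setIntegral_eq (jumpσ_le γ s) hf
    (fun _ _ _ => hg.integrableOn) (fun B hB _ => ?_) hg_meas.aestronglyMeasurable).symm
  obtain ⟨hB, hdisj | hsub⟩ := mem_jumpColl_iff.1 (measurableSet_jumpσ_iff.1 hB)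
  · exact (setIntegral_congr_fun hB (hfg.mono hdisj.subset_compl_right)).symm
  · have hJ := measurableSet_jumpSet hγ s
    have hdiff : ∫ ω in B \ jumpSet γ s, f ω ∂μ = ∫ ω in B \ jumpSet γ s, g ω ∂μ :=
      setIntegral_congr_fun (hB.diff hJ) (hfg.mono fun _ hω => hω.2)
    rw [← integral_inter_add_sdiff hJ hf.integrableOn,
      ← integral_inter_add_sdiff hJ hg.integrableOn, inter_eq_right.2 hsub, hint, hdiff]

end Filtration

section Localization

variable {γ : Ω → ℝ≥0∞} {M : ℝ≥0 → Ω → ℝ}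

/-- The paths of `M` are constant on `[γ, ∞)`. -/
def FrozenAfter (γ : Ω → ℝ≥0∞) (M : ℝ≥0 → Ω → ℝ) : Prop :=
  ∀ ⦃ω : Ω⦄ ⦃r t : ℝ≥0⦄, γ ω ≤ r → r ≤ t → M t ω = M r ω

/-- The stopping time that stops at the deterministic time `r` unless the jump has occurred by
then. It localizes processes that do not move after `γ`, see `stopped_freezeTime`. -/
def freezeTime (γ : Ω → ℝ≥0∞) (r : ℝ≥0) (ω : Ω) : ℝ≥0∞ := if γ ω ≤ r then ⊤ else r

omit m in
lemma monotone_freezeTime (γ : Ω → ℝ≥0∞) (ω : Ω) : Monotone fun r => freezeTime γ r ω := by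
  intro a b hab
  have hab' : (a : ℝ≥0∞) ≤ b := by exact_mod_cast hab
  by_cases hb : γ ω ≤ b
  · simp [freezeTime, hb]
  · have ha : ¬ γ ω ≤ a := fun h => hb (h.trans hab')
    simpa [freezeTime, ha, hb] using hab

omit m in
lemma le_freezeTime {t : ℝ≥0∞} {r : ℝ≥0} {ω : Ω} (h : t ⊓ γ ω ≤ r) : t ≤ freezeTime γ r ω := by
  rw [freezeTime]
  split_ifs with hγr
  · exact le_top
  · exact (inf_le_iff.1 h).resolve_right hγr

lemma isSJStoppingTime_freezeTime (hγ : Measurable γ) (r : ℝ≥0) :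
    IsSJStoppingTime γ (freezeTime γ r) := by
  intro t
  rcases le_or_gt r t with hrt | htr
  · have heq : {ω | freezeTime γ r ω ≤ t} = jumpSet γ r := by
      ext ω
      by_cases hω : γ ω ≤ r <;> simp [freezeTime, jumpSet, hω, hrt, not_le.1, not_lt.2]
    rw [heq]
    exact mem_jumpColl_iff.2 ⟨measurableSet_jumpSet hγ r, .inr (jumpSet_anti γ hrt)⟩
  · have heq : {ω | freezeTime γ r ω ≤ t} = ∅ := by
      ext ω
      by_cases hω : γ ω ≤ r <;> simp [freezeTime, hω, htr]
    rw [heq]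
    exact mem_jumpColl_iff.2 ⟨.empty, .inl (empty_disjoint _)⟩

omit m in
lemma stopped_freezeTime (hM : FrozenAfter γ M) (r : ℝ≥0) :
    stopped M (freezeTime γ r) = fun t => M (t ⊓ r) := by
  ext t ω
  by_cases hω : γ ω ≤ r
  · rcases le_total t r with htr | hrt
    · simp [stopped, freezeTime, hω, htr]
    · simp [stopped, freezeTime, hω, hrt, hM hω hrt]
  · simp [stopped, freezeTime, hω, ← ENNReal.coe_min]

variable {μ : Measure Ω}

lemma MartingaleOn.mono {S T : Set ℝ≥0} (hM : MartingaleOn μ γ M T) (hST : S ⊆ T) :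
    MartingaleOn μ γ M S :=
  ⟨fun t ht => hM.1 t (hST ht), fun t ht => hM.2.1 t (hST ht),
    fun s hs t ht => hM.2.2 s (hST hs) t (hST ht)⟩

lemma MartingaleOn.uiMartingale_min [IsFiniteMeasure μ] {r : ℝ≥0}
    (hM : MartingaleOn μ γ M (Iic r)) : UIMartingale μ γ fun t => M (t ⊓ r) := by
  obtain ⟨hmeas, hint, hcond⟩ := hM
  have hmin (t : ℝ≥0) : t ⊓ r ∈ Iic r := mem_Iic.2 inf_le_right
  refine ⟨⟨fun t _ => (hmeas _ (hmin t)).mono (jumpσ_mono γ inf_le_left) le_rfl,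
    fun t _ => hint _ (hmin t), fun s _ t _ hst => ?_⟩, ?_⟩
  · rcases le_total s r with hsr | hrs
    · simpa [hsr] using hcond s (mem_Iic.2 hsr) _ (hmin t) (le_inf hst hsr)
    · simp only [inf_eq_right.2 hrs, inf_eq_right.2 (hrs.trans hst)]
      rw [condExp_of_stronglyMeasurable (jumpσ_le γ s)
        ((hmeas r self_mem_Iic).mono (jumpσ_mono γ hrs) le_rfl).stronglyMeasurable
        (hint r self_mem_Iic)]
  · exact ((hint r self_mem_Iic).uniformIntegrable_condExp
      (fun t => jumpσ_le γ (t ⊓ r))).ae_eq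
        fun t => hcond _ (hmin t) r self_mem_Iic inf_le_right

lemma isLowerSet_TT (μ : Measure Ω) (γ : Ω → ℝ≥0∞) : IsLowerSet (TT μ γ) :=
  fun _ _ hst ht => lt_of_lt_of_le (show 0 < μ _ from ht) <|
    measure_mono fun _ hω => (ENNReal.coe_le_coe.2 hst).trans hω

lemma mem_TT_of_le {s t : ℝ≥0} (ht : t ∈ TT μ γ) (hst : s ≤ t) : s ∈ TT μ γ :=
  isLowerSet_TT μ γ hst ht

variable [IsProbabilityMeasure μ]

lemma zero_mem_TT : (0 : ℝ≥0) ∈ TT μ γ := by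
  simp [TT]

lemma exists_monotone_cofinal_TT (μ : Measure Ω) [IsProbabilityMeasure μ] (γ : Ω → ℝ≥0∞) :
    ∃ u : ℕ → ℝ≥0, Monotone u ∧ (∀ n, u n ∈ TT μ γ) ∧
      ∀ t ∈ TT μ γ, ∀ᶠ n in atTop, t ≤ u n := by
  have : Nonempty (TT μ γ) := ⟨0, zero_mem_TT⟩
  have := (isLowerSet_TT μ γ).ordConnected
  obtain ⟨u, hu, hlim⟩ := exists_seq_monotone_tendsto_atTop_atTop (TT μ γ)
  exact ⟨fun n => u n, fun _ _ h => hu h, fun n => (u n).2,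
    fun t ht => hlim.eventually_ge_atTop ⟨t, ht⟩⟩

lemma ae_le_tG (hγ : Measurable γ) : ∀ᵐ ω ∂μ, γ ω ≤ tG μ γ := by
  suffices essSup γ μ ≤ tG μ γ from
    (ENNReal.ae_le_essSup γ).mono fun ω hω => hω.trans this
  refine le_of_forall_gt_imp_ge_of_dense fun a ha => essSup_le_of_ae_le a ?_
  rcases eq_or_ne a ⊤ with rfl | ha_top
  · exact .of_forall fun _ => le_top
  lift a to ℝ≥0 using ha_top
  have hone : μ {ω | γ ω ≤ a} = 1 :=
    le_antisymm prob_le_one (not_lt.1 fun h => ha.not_ge (le_sSup ⟨a, h, rfl⟩))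
  exact (prob_compl_eq_zero_iff (measurableSet_le hγ measurable_const)).2 hone

lemma tG_pos (hγ : Measurable γ) (hpos : 0 < μ {ω | 0 < γ ω}) : 0 < tG μ γ := by
  obtain ⟨ω, hω, hle⟩ := ((frequently_ae_iff.2 hpos.ne').and_eventually (ae_le_tG hγ)).exists
  exact hω.trans_le hle

lemma mem_TT_of_lt_tG {t : ℝ≥0} (ht : (t : ℝ≥0∞) < tG μ γ) : t ∈ TT μ γ := by
  obtain ⟨_, ⟨r, hr : μ {ω | γ ω ≤ r} < 1, rfl⟩, htr⟩ := lt_sSup_iff.1 ht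
  refine mem_TT_of_le (t := r) (show 0 < μ _ from pos_iff_ne_zero.2 fun hnull => hr.ne ?_)
    (ENNReal.coe_lt_coe.1 htr).le
  have hae : ∀ᵐ ω ∂μ, γ ω ≤ r :=
    (measure_eq_zero_iff_ae_notMem.1 hnull).mono fun ω hω => (not_le.1 hω).le
  rw [measure_congr (eventuallyEq_univ.2 hae), measure_univ]

lemma setOf_tG_le_ae_eq (hγ : Measurable γ) :
    {ω | tG μ γ ≤ γ ω} =ᵐ[μ] {ω | γ ω = tG μ γ} := by
  filter_upwards [ae_le_tG hγ] with ω hω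
  exact propext ⟨hω.antisymm, fun h => h.ge⟩

lemma mem_TT_iff (hγ : Measurable γ) {t : ℝ≥0} :
    t ∈ TT μ γ ↔ (t : ℝ≥0∞) < tG μ γ ∨ CaseB μ γ ∧ (t : ℝ≥0∞) = tG μ γ := by
  refine ⟨fun ht => ?_, ?_⟩
  · obtain ⟨ω, hω, hle⟩ :=
      ((frequently_ae_iff.2 (ne_of_gt ht)).and_eventually (ae_le_tG hγ)).exists
    refine (hω.trans hle).lt_or_eq.imp_right fun heq => ⟨?_, heq⟩
    have hpos : 0 < μ {ω | tG μ γ ≤ γ ω} := heq ▸ ht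
    have htop : tG μ γ < ⊤ := heq ▸ ENNReal.coe_lt_top
    rw [measure_congr (setOf_tG_le_ae_eq hγ)] at hpos
    simpa [CaseB, htop] using hpos
  · rintro (hlt | ⟨hB, heq⟩)
    · exact mem_TT_of_lt_tG hlt
    · exact hB.trans_le (measure_mono fun ω hω => (heq.trans hω.1.symm).le)

lemma ae_min_mem_TT (hγ : Measurable γ) :
    ∀ᵐ ω ∂μ, ∀ t : ℝ≥0, ((t : ℝ≥0∞) ⊓ γ ω).toNNReal ∈ TT μ γ := by
  have hB : ∀ᵐ ω ∂μ, γ ω = tG μ γ ∧ tG μ γ < ⊤ → CaseB μ γ := by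
    by_cases hB : CaseB μ γ
    · exact .of_forall fun _ _ => hB
    · simp only [hB, imp_false]
      exact measure_eq_zero_iff_ae_notMem.1 (nonpos_iff_eq_zero.1 (not_lt.1 hB))
  filter_upwards [ae_le_tG hγ, hB] with ω hle hB t
  rw [mem_TT_iff hγ, coe_toNNReal_coe_inf]
  refine (inf_le_right.trans hle).lt_or_eq.imp_right fun heq => ⟨hB ⟨?_, ?_⟩, heq⟩
  · exact hle.antisymm (heq ▸ inf_le_right)
  · exact heq ▸ inf_le_left.trans_lt ENNReal.coe_lt_top

lemma localMartingale_of_martingaleOn_TT (hγ : Measurable γ)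
    (hadapted : ∀ t, Measurable[jumpσ m γ t] (M t)) (hcadlag : ∀ᵐ ω ∂μ, Cadlag fun t => M t ω)
    (hfrozen : FrozenAfter γ M) (hM : MartingaleOn μ γ M (TT μ γ)) : LocalMartingale μ γ M := by
  obtain ⟨u, hu, huTT, hcofinal⟩ := exists_monotone_cofinal_TT μ γ
  refine ⟨hadapted, hcadlag, fun n => freezeTime γ (u n),
    fun n => isSJStoppingTime_freezeTime hγ (u n), ?_, fun n => ?_⟩
  · filter_upwards [ae_min_mem_TT hγ] with ω hω
    refine ⟨(monotone_freezeTime γ ω).comp hu, ENNReal.tendsto_nhds_top fun N => ?_⟩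
    filter_upwards [hcofinal _ (hω (N + 1))] with n hn
    have hle : ((N + 1 : ℝ≥0) : ℝ≥0∞) ⊓ γ ω ≤ u n :=
      coe_toNNReal_coe_inf _ _ ▸ ENNReal.coe_le_coe.2 hn
    exact lt_of_lt_of_le (by norm_cast; simp) (le_freezeTime hle)
  · rw [stopped_freezeTime hfrozen]
    exact (hM.mono fun _ ht => mem_TT_of_le (huTT n) ht).uiMartingale_min

end Localization

section Compensator

variable {μ : Measure Ω} {γ : Ω → ℝ≥0∞} {V : Ω → ℝ} {K Λ : ℝ≥0 → ℝ} {s r t : ℝ≥0}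

/-- `K(t) = E[V | γ = t]` on `𝒯`, expressed by `E(V·1_{γ ≤ t}) = ∫_[0,t] K dG` for `t ∈ 𝒯`,
where only local integrability of `V` and `K` is required. -/
structure IsJumpMean (μ : Measure Ω) (γ : Ω → ℝ≥0∞) (V : Ω → ℝ) (K : ℝ≥0 → ℝ) : Prop where
  memL1loc : MemL1loc μ γ K
  integrableOn : ∀ t ∈ TT μ γ, IntegrableOn V {ω | γ ω ≤ t} μ
  setIntegral_eq : ∀ t ∈ TT μ γ, ∫ ω in {ω | γ ω ≤ t}, V ω ∂μ
    = ∫ x in Icc (0 : ℝ≥0∞) t, K x.toNNReal ∂μ.map γ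

/-- The density `Ḡ(s−)⁻¹ K(s)` of the compensator with respect to the law `dG` of `γ`, as a
function on `[0, ∞]`. Its value at `∞` is junk and never enters, since `𝒯 ⊆ ℝ₊`. -/
def compensatorDensity (μ : Measure Ω) (γ : Ω → ℝ≥0∞) (K : ℝ≥0 → ℝ) (x : ℝ≥0∞) : ℝ :=
  (GbarLeft μ γ x.toNNReal)⁻¹ * K x.toNNReal

/-- `Λ` is a Borel function with `Λ(t) = ∫_(0,t] Ḡ(s−)⁻¹ K(s) dG(s)` for `t ∈ 𝒯`. Then
`Λ(t ∧ γ)` is the compensator of the single jump process; its values off `𝒯` do not matter, as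
`t ∧ γ` stays in `𝒯` almost surely. -/
structure IsCompensatorFn (μ : Measure Ω) (γ : Ω → ℝ≥0∞) (K Λ : ℝ≥0 → ℝ) : Prop where
  measurable : Measurable Λ
  eq_setIntegral : ∀ t ∈ TT μ γ,
    Λ t = ∫ x in Ioc 0 (t : ℝ≥0∞), compensatorDensity μ γ K x ∂μ.map γ

/-- The compensated single jump process `Λ(t ∧ γ) − V·1_{t ≥ γ}`. -/
def compensatedJump (γ : Ω → ℝ≥0∞) (V : Ω → ℝ) (Λ : ℝ≥0 → ℝ) (t : ℝ≥0) (ω : Ω) : ℝ :=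
  Λ ((t : ℝ≥0∞) ⊓ γ ω).toNNReal - singleJump γ V t ω

omit m in
lemma frozenAfter_compensatedJump (γ : Ω → ℝ≥0∞) (V : Ω → ℝ) (Λ : ℝ≥0 → ℝ) :
    FrozenAfter γ (compensatedJump γ V Λ) := by
  intro ω r t hr hrt
  have ht : γ ω ≤ t := hr.trans (ENNReal.coe_le_coe.2 hrt)
  simp only [compensatedJump, singleJump, inf_eq_right.2 hr, inf_eq_right.2 ht, hr.not_gt,
    ht.not_gt]

omit m in
lemma compensatedJump_of_mem_jumpSet {ω : Ω} (hω : ω ∈ jumpSet γ t) :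
    compensatedJump γ V Λ t ω = Λ t := by
  have hlt : (t : ℝ≥0∞) < γ ω := hω
  simp [compensatedJump, singleJump, hlt, hlt.le]

lemma measurable_singleJump (hγ : Measurable γ) (hV : Measurable V) (t : ℝ≥0) :
    Measurable (singleJump γ V t) :=
  Measurable.ite (measurableSet_jumpSet hγ t) measurable_const hV

lemma measurable_compensatedJump (hγ : Measurable γ) (hV : Measurable V) (hΛ : Measurable Λ)
    (t : ℝ≥0) : Measurable[jumpσ m γ t] (compensatedJump γ V Λ t) :=
  measurable_jumpσ_of_eqOn_jumpSet
    ((hΛ.comp (measurable_const.inf hγ).ennreal_toNNReal).sub (measurable_singleJump hγ hV t))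
    fun _ hω => compensatedJump_of_mem_jumpSet hω

lemma IsCompensatorFn.comp_min_eq (hΛ : IsCompensatorFn μ γ K Λ) {x : ℝ≥0∞}
    (hx : ((t : ℝ≥0∞) ⊓ x).toNNReal ∈ TT μ γ) :
    Λ ((t : ℝ≥0∞) ⊓ x).toNNReal
      = ∫ y in Ioc 0 ((t : ℝ≥0∞) ⊓ x), compensatorDensity μ γ K y ∂μ.map γ := by
  rw [hΛ.eq_setIntegral _ hx, coe_toNNReal_coe_inf]

lemma min_toNNReal_mem_TT (ht : t ∈ TT μ γ) (x : ℝ≥0∞) :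
    ((t : ℝ≥0∞) ⊓ x).toNNReal ∈ TT μ γ :=
  mem_TT_of_le ht (ENNReal.coe_le_coe.1 ((coe_toNNReal_coe_inf t x).trans_le inf_le_left))

lemma integrable_singleJump (hγ : Measurable γ) (hV : IntegrableOn V {ω | γ ω ≤ t} μ) :
    Integrable (singleJump γ V t) μ :=
  singleJump_eq_indicator γ V t ▸ hV.integrable_indicator (measurableSet_le hγ measurable_const)

lemma IsJumpMean.setIntegral_preimage_Ioc (hK : IsJumpMean μ γ V K) (hγ : Measurable γ)
    (hsr : s ≤ r) (hr : r ∈ TT μ γ) :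
    ∫ ω in γ ⁻¹' Ioc s r, V ω ∂μ = ∫ x in Ioc (s : ℝ≥0∞) r, K x.toNNReal ∂μ.map γ := by
  have hsr' : (s : ℝ≥0∞) ≤ r := ENNReal.coe_le_coe.2 hsr
  calc ∫ ω in γ ⁻¹' Ioc s r, V ω ∂μ
      = ∫ ω in {ω | γ ω ≤ r} \ {ω | γ ω ≤ s}, V ω ∂μ := by rw [← Iic_sdiff_Iic]; rfl
    _ = ∫ x in Icc (0 : ℝ≥0∞) r \ Icc 0 (s : ℝ≥0∞), K x.toNNReal ∂μ.map γ := by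
        rw [setIntegral_sdiff (measurableSet_le hγ measurable_const) (hK.integrableOn r hr)
            fun ω hω => le_trans hω hsr',
          setIntegral_sdiff measurableSet_Icc (hK.memL1loc.2 r hr) (Icc_subset_Icc_right hsr'),
          hK.setIntegral_eq r hr, hK.setIntegral_eq s (mem_TT_of_le hr hsr)]
    _ = ∫ x in Ioc (s : ℝ≥0∞) r, K x.toNNReal ∂μ.map γ := by
        rw [← bot_eq_zero, Icc_bot, Icc_bot, Iic_sdiff_Iic]

lemma IsJumpMean.setIntegral_jumpSet_singleJump (hK : IsJumpMean μ γ V K) (hγ : Measurable γ)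
    (hsr : s ≤ r) (hr : r ∈ TT μ γ) :
    ∫ ω in jumpSet γ s, singleJump γ V r ω ∂μ
      = ∫ x in Ioc (s : ℝ≥0∞) r, K x.toNNReal ∂μ.map γ := by
  rw [← hK.setIntegral_preimage_Ioc hγ hsr hr, singleJump_eq_indicator,
    setIntegral_indicator (measurableSet_le hγ measurable_const)]
  rfl

variable [IsFiniteMeasure μ]

lemma antitone_GbarLeft (μ : Measure Ω) [IsFiniteMeasure μ] (γ : Ω → ℝ≥0∞) :
    Antitone (GbarLeft μ γ) := fun _ _ hst =>
  ENNReal.toReal_mono (measure_ne_top μ _)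
    (measure_mono fun _ hω => (ENNReal.coe_le_coe.2 hst).trans hω)

lemma GbarLeft_pos (ht : t ∈ TT μ γ) : 0 < GbarLeft μ γ t :=
  ENNReal.toReal_pos (ne_of_gt ht) (measure_ne_top μ _)

lemma measureReal_le_mul_compensatorDensity (ht : t ∈ TT μ γ) {y : ℝ≥0∞} (hy : y ≤ t) :
    μ.real {ω | y ≤ γ ω} * compensatorDensity μ γ K y = K y.toNNReal := by
  lift y to ℝ≥0 using ne_top_of_le_ne_top ENNReal.coe_ne_top hy
  exact mul_inv_cancel_left₀ (GbarLeft_pos (mem_TT_of_le ht (ENNReal.coe_le_coe.1 hy))).ne' _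

lemma integrableOn_compensatorDensity (hK : MemL1loc μ γ K) (ht : t ∈ TT μ γ) :
    IntegrableOn (compensatorDensity μ γ K) (Ioc 0 (t : ℝ≥0∞)) (μ.map γ) := by
  have hinv : Measurable fun x : ℝ≥0∞ => (GbarLeft μ γ x.toNNReal)⁻¹ :=
    ((antitone_GbarLeft μ γ).measurable.comp measurable_id.ennreal_toNNReal).inv
  refine ((hK.2 t ht).mono_set Ioc_subset_Icc_self).bdd_mul hinv.aestronglyMeasurable
    (c := (GbarLeft μ γ t)⁻¹) ?_
  refine (ae_restrict_mem measurableSet_Ioc).mono fun x hx => ?_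
  have hxt : x.toNNReal ≤ t := ENNReal.toNNReal_mono ENNReal.coe_ne_top hx.2
  rw [norm_inv, Real.norm_of_nonneg (GbarLeft_pos (mem_TT_of_le ht hxt)).le]
  exact inv_anti₀ (GbarLeft_pos ht) (antitone_GbarLeft μ γ hxt)

lemma IsCompensatorFn.integrable_comp_min (hΛ : IsCompensatorFn μ γ K Λ) (hK : MemL1loc μ γ K)
    (hγ : Measurable γ) (ht : t ∈ TT μ γ) :
    Integrable (fun ω => Λ ((t : ℝ≥0∞) ⊓ γ ω).toNNReal) μ := by
  refine .of_bound
    (hΛ.measurable.comp (measurable_const.inf hγ).ennreal_toNNReal).aestronglyMeasurable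
    (∫ x in Ioc 0 (t : ℝ≥0∞), ‖compensatorDensity μ γ K x‖ ∂μ.map γ) (.of_forall fun ω => ?_)
  rw [hΛ.comp_min_eq (min_toNNReal_mem_TT ht _)]
  exact (norm_integral_le_integral_norm _).trans <| setIntegral_mono_set
    (integrableOn_compensatorDensity hK ht).norm (.of_forall fun _ => norm_nonneg _)
    (Ioc_subset_Ioc_right inf_le_left).eventuallyLE

lemma IsCompensatorFn.comp_min_sub_eq (hΛ : IsCompensatorFn μ γ K Λ) (hK : MemL1loc μ γ K)
    (hsr : s ≤ r) (hr : r ∈ TT μ γ) {x : ℝ≥0∞} (hx : s < x) :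
    Λ ((r : ℝ≥0∞) ⊓ x).toNNReal - Λ s
      = ∫ y in Ioc (s : ℝ≥0∞) ((r : ℝ≥0∞) ⊓ x), compensatorDensity μ γ K y ∂μ.map γ := by
  have hsx : (s : ℝ≥0∞) ≤ (r : ℝ≥0∞) ⊓ x := le_inf (ENNReal.coe_le_coe.2 hsr) hx.le
  have hint : IntegrableOn (compensatorDensity μ γ K) (Ioc 0 ((r : ℝ≥0∞) ⊓ x)) (μ.map γ) :=
    (integrableOn_compensatorDensity hK hr).mono_set (Ioc_subset_Ioc_right inf_le_left)
  rw [hΛ.comp_min_eq (min_toNNReal_mem_TT hr x), hΛ.eq_setIntegral s (mem_TT_of_le hr hsr),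
    ← setIntegral_sdiff measurableSet_Ioc hint (Ioc_subset_Ioc_right hsx)]
  congr 2
  ext y
  simp only [Set.mem_sdiff, mem_Ioc, not_and, not_le]
  exact ⟨fun ⟨⟨h0, hy⟩, hs⟩ => ⟨hs h0, hy⟩, fun ⟨hs, hy⟩ => ⟨⟨pos_of_gt hs, hy⟩, fun _ => hs⟩⟩

lemma IsCompensatorFn.setIntegral_jumpSet_comp_min_sub (hΛ : IsCompensatorFn μ γ K Λ)
    (hK : MemL1loc μ γ K) (hγ : Measurable γ) (hsr : s ≤ r) (hr : r ∈ TT μ γ) :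
    ∫ ω in jumpSet γ s, (Λ ((r : ℝ≥0∞) ⊓ γ ω).toNNReal - Λ s) ∂μ
      = ∫ y in Ioc (s : ℝ≥0∞) r, K y.toNNReal ∂μ.map γ := by
  calc ∫ ω in jumpSet γ s, (Λ ((r : ℝ≥0∞) ⊓ γ ω).toNNReal - Λ s) ∂μ
      = ∫ ω in {ω | (s : ℝ≥0∞) < γ ω},
          ∫ y in Ioc (s : ℝ≥0∞) ((r : ℝ≥0∞) ⊓ γ ω), compensatorDensity μ γ K y ∂μ.map γ ∂μ :=
        setIntegral_congr_fun (measurableSet_jumpSet hγ s) fun _ hω =>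
          hΛ.comp_min_sub_eq hK hsr hr hω
    _ = ∫ y in Ioc (s : ℝ≥0∞) r,
          μ.real {ω | y ≤ γ ω} • compensatorDensity μ γ K y ∂μ.map γ :=
        setIntegral_setIntegral_Ioc_min hγ <|
          (integrableOn_compensatorDensity hK hr).mono_set (Ioc_subset_Ioc_left zero_le)
    _ = ∫ y in Ioc (s : ℝ≥0∞) r, K y.toNNReal ∂μ.map γ :=
        setIntegral_congr_fun measurableSet_Ioc fun _ hy =>
          measureReal_le_mul_compensatorDensity hr hy.2

lemma integrable_compensatedJump (hγ : Measurable γ) (hK : IsJumpMean μ γ V K)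
    (hΛ : IsCompensatorFn μ γ K Λ) (ht : t ∈ TT μ γ) : Integrable (compensatedJump γ V Λ t) μ :=
  (hΛ.integrable_comp_min hK.memL1loc hγ ht).sub
    (integrable_singleJump hγ (hK.integrableOn t ht))

lemma setIntegral_jumpSet_compensatedJump (hγ : Measurable γ) (hK : IsJumpMean μ γ V K)
    (hΛ : IsCompensatorFn μ γ K Λ) (hsr : s ≤ r) (hr : r ∈ TT μ γ) :
    ∫ ω in jumpSet γ s, compensatedJump γ V Λ r ω ∂μ
      = ∫ ω in jumpSet γ s, compensatedJump γ V Λ s ω ∂μ := by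
  have hconst : ∫ ω in jumpSet γ s, compensatedJump γ V Λ s ω ∂μ = ∫ _ in jumpSet γ s, Λ s ∂μ :=
    setIntegral_congr_fun (measurableSet_jumpSet hγ s) fun _ => compensatedJump_of_mem_jumpSet
  have hcomp := hΛ.setIntegral_jumpSet_comp_min_sub hK.memL1loc hγ hsr hr
  have hΛr := (hΛ.integrable_comp_min hK.memL1loc hγ hr).integrableOn (s := jumpSet γ s)
  rw [integral_sub hΛr (integrable_const _), ← hK.setIntegral_jumpSet_singleJump hγ hsr hr]
    at hcomp
  calc ∫ ω in jumpSet γ s, compensatedJump γ V Λ r ω ∂μ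
      = ∫ ω in jumpSet γ s, Λ ((r : ℝ≥0∞) ⊓ γ ω).toNNReal ∂μ
          - ∫ ω in jumpSet γ s, singleJump γ V r ω ∂μ :=
        integral_sub hΛr (integrable_singleJump hγ (hK.integrableOn r hr)).integrableOn
    _ = ∫ ω in jumpSet γ s, compensatedJump γ V Λ s ω ∂μ := by
        rw [← hcomp, sub_sub_cancel, hconst]

lemma martingaleOn_compensatedJump (hγ : Measurable γ) (hV : Measurable V)
    (hK : IsJumpMean μ γ V K) (hΛ : IsCompensatorFn μ γ K Λ) :
    MartingaleOn μ γ (compensatedJump γ V Λ) (TT μ γ) :=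
  ⟨fun t _ => measurable_compensatedJump hγ hV hΛ.measurable t,
    fun _ ht => integrable_compensatedJump hγ hK hΛ ht,
    fun s hs _ ht hst => condExp_jumpσ_ae_eq hγ (integrable_compensatedJump hγ hK hΛ ht)
      (integrable_compensatedJump hγ hK hΛ hs) (measurable_compensatedJump hγ hV hΛ.measurable s)
      (fun _ hω => frozenAfter_compensatedJump γ V Λ (not_lt.1 hω) hst)
      (setIntegral_jumpSet_compensatedJump hγ hK hΛ hst ht)⟩

end Compensator

section LocalMartingale

variable {μ : Measure Ω} [IsProbabilityMeasure μ] {γ : Ω → ℝ≥0∞} {V : Ω → ℝ}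
  {K F Λ : ℝ≥0 → ℝ} {t : ℝ≥0}

lemma ae_cadlag_compensatedJump (hγ : Measurable γ) (hK : MemL1loc μ γ K)
    (hΛ : IsCompensatorFn μ γ K Λ) : ∀ᵐ ω ∂μ, Cadlag fun t => compensatedJump γ V Λ t ω := by
  filter_upwards [ae_min_mem_TT hγ] with ω hω
  refine Cadlag.sub ?_ (cadlag_singleJump γ V ω)
  simp_rw [hΛ.comp_min_eq (hω _)]
  refine cadlag_setIntegral_Ioc_min fun t => ?_
  rw [← coe_toNNReal_coe_inf]
  exact integrableOn_compensatorDensity hK (hω t)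

theorem localMartingale_compensatedJump (hγ : Measurable γ) (hV : Measurable V)
    (hK : IsJumpMean μ γ V K) (hΛ : IsCompensatorFn μ γ K Λ) :
    LocalMartingale μ γ (compensatedJump γ V Λ) :=
  localMartingale_of_martingaleOn_TT hγ (measurable_compensatedJump hγ hV hΛ.measurable)
    (ae_cadlag_compensatedJump hγ hK.memL1loc hΛ) (frozenAfter_compensatedJump γ V Λ)
    (martingaleOn_compensatedJump hγ hV hK hΛ)

/-- The function of `t ∧ γ` giving the paper's compensator in both cases: `F` in Case A, and
`F + K(t_G)·1_[t_G,∞)` in Case B. -/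
def jumpCompensatorFn (μ : Measure Ω) (γ : Ω → ℝ≥0∞) (K F : ℝ≥0 → ℝ) (t : ℝ≥0) : ℝ :=
  F t + if CaseB μ γ ∧ tG μ γ ≤ t then K (tG μ γ).toNNReal else 0

lemma measurable_jumpCompensatorFn (μ : Measure Ω) (γ : Ω → ℝ≥0∞) (hF : Measurable F) :
    Measurable (jumpCompensatorFn μ γ K F) := by
  refine hF.add (Measurable.ite ?_ measurable_const measurable_const)
  exact (MeasurableSet.const _).inter
    (measurableSet_le measurable_const ENNReal.continuous_coe.measurable)

lemma setIntegral_singleton_compensatorDensity (hγ : Measurable γ) (ht : t ∈ TT μ γ)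
    (htG : (t : ℝ≥0∞) = tG μ γ) :
    ∫ x in {tG μ γ}, compensatorDensity μ γ K x ∂μ.map γ = K t := by
  have hatom : (μ.map γ).real {tG μ γ} = μ.real {ω | tG μ γ ≤ γ ω} := by
    rw [measureReal_def, measureReal_def, Measure.map_apply hγ (measurableSet_singleton _),
      measure_congr (setOf_tG_le_ae_eq hγ)]
    rfl
  rw [integral_singleton, hatom, smul_eq_mul, ← htG,
    measureReal_le_mul_compensatorDensity ht le_rfl, ENNReal.toNNReal_coe]

lemma eq_setIntegral_Ioo_tG (hγ : Measurable γ) (hpos : 0 < μ {ω | 0 < γ ω})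
    (hK : MemL1loc μ γ K)
    (hF : ∀ t : ℝ≥0, (t : ℝ≥0∞) < tG μ γ →
      F t = ∫ x in Ioc (0 : ℝ≥0∞) t, compensatorDensity μ γ K x ∂μ.map γ)
    (hFlim : Tendsto F (leftF (tG μ γ)) (𝓝 (F t))) (ht : t ∈ TT μ γ)
    (htG : (t : ℝ≥0∞) = tG μ γ) :
    F t = ∫ x in Ioo 0 (tG μ γ), compensatorDensity μ γ K x ∂μ.map γ := by
  have := leftF_neBot (tG_pos hγ hpos)
  have hint : IntegrableOn (compensatorDensity μ γ K) (Ioo 0 (tG μ γ)) (μ.map γ) :=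
    htG ▸ (integrableOn_compensatorDensity hK ht).mono_set Ioo_subset_Ioc_self
  have hlt : ∀ᶠ u : ℝ≥0 in leftF (tG μ γ), (u : ℝ≥0∞) < tG μ γ :=
    tendsto_comap.eventually self_mem_nhdsWithin
  exact tendsto_nhds_unique hFlim
    ((tendsto_setIntegral_Ioc_leftF hint).congr' (hlt.mono fun u hu => (hF u hu).symm))

lemma isCompensatorFn_jumpCompensatorFn (hγ : Measurable γ) (hpos : 0 < μ {ω | 0 < γ ω})
    (hK : MemL1loc μ γ K) (hFmeas : Measurable F)
    (hF : ∀ t : ℝ≥0, (t : ℝ≥0∞) < tG μ γ →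
      F t = ∫ x in Ioc (0 : ℝ≥0∞) t, compensatorDensity μ γ K x ∂μ.map γ)
    (hFB : CaseB μ γ → Tendsto F (leftF (tG μ γ)) (𝓝 (F (tG μ γ).toNNReal))) :
    IsCompensatorFn μ γ K (jumpCompensatorFn μ γ K F) := by
  refine ⟨measurable_jumpCompensatorFn μ γ hFmeas, fun t ht => ?_⟩
  obtain hlt | ⟨hB, htG⟩ := (mem_TT_iff hγ).1 ht
  · simp only [jumpCompensatorFn, hlt.not_ge, and_false, if_false, add_zero, hF t hlt]
  have hint := integrableOn_compensatorDensity hK ht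
  rw [htG] at hint
  have htG' : (tG μ γ).toNNReal = t := by rw [← htG, ENNReal.toNNReal_coe]
  have hFt := eq_setIntegral_Ioo_tG hγ hpos hK hF (htG' ▸ hFB hB) ht htG
  rw [jumpCompensatorFn, if_pos ⟨hB, htG.ge⟩, hFt, htG',
    ← setIntegral_singleton_compensatorDensity (K := K) hγ ht htG,
    ← setIntegral_union (by simp) (measurableSet_singleton _)
      (hint.mono_set Ioo_subset_Ioc_self)
      (hint.mono_set (singleton_subset_iff.2 ⟨tG_pos hγ hpos, le_rfl⟩)),
    Ioo_union_right (tG_pos hγ hpos), htG]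

end LocalMartingale

/-- **Theorem 6.** Let `V` satisfy `{γ=0} ⊆ {V=0}` and `E(|V|·1_{γ≤t}) < ∞` for `t ∈ 𝒯`,
let `K(t) = E[V | γ = t]` (i.e. `E(V·1_{γ≤t}) = ∫_{[0,t]} K dG` for `t ∈ 𝒯`), and let
`F(t) = ∫_(0,t] Ḡ(s−)⁻¹ K(s) dG(s)` for `t < t_G`, with `F(t_G) = lim_{t↑t_G} F(t)` in
Case B. With `A_t = F(t ∧ γ)` in Case A and
`A_t = F(t ∧ γ) + K(t_G)·1_{γ ≥ t_G}·1_{t ≥ t_G}` in Case B, the process `M = A − X`,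
where `X_t = V·1_{t≥γ}`, is a local martingale (so `A` is the compensator of `X`). -/
theorem stmt_18 (μ : Measure Ω) [IsProbabilityMeasure μ] (γ : Ω → ℝ≥0∞)
    (hγ : Measurable γ) (hpos : 0 < μ {ω | 0 < γ ω})
    (V : Ω → ℝ) (hV : Measurable V) (hV0 : ∀ ω, γ ω = 0 → V ω = 0)
    (hVint : ∀ t ∈ TT μ γ,
      Integrable (fun ω => ({ω' | γ ω' ≤ (t : ℝ≥0∞)}.indicator V) ω) μ)
    (K : ℝ≥0 → ℝ) (hK1 : MemL1loc μ γ K)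
    (hK : ∀ t ∈ TT μ γ,
      ∫ ω in {ω | γ ω ≤ (t : ℝ≥0∞)}, V ω ∂μ
        = ∫ x in Icc (0 : ℝ≥0∞) (t : ℝ≥0∞), K x.toNNReal ∂(μ.map γ))
    (F : ℝ≥0 → ℝ) (hFmeas : Measurable F)
    (hF : ∀ t : ℝ≥0, (t : ℝ≥0∞) < tG μ γ →
      F t = ∫ x in Ioc (0 : ℝ≥0∞) (t : ℝ≥0∞),
        (GbarLeft μ γ x.toNNReal)⁻¹ * K x.toNNReal ∂(μ.map γ))
    (hFB : CaseB μ γ → Tendsto F (leftF (tG μ γ)) (𝓝 (F (tG μ γ).toNNReal)))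
    (A : ℝ≥0 → Ω → ℝ)
    (hA : A = fun (t : ℝ≥0) (ω : Ω) =>
      F (((t : ℝ≥0∞) ⊓ γ ω).toNNReal) +
        if CaseB μ γ ∧ tG μ γ ≤ γ ω ∧ tG μ γ ≤ (t : ℝ≥0∞)
          then K (tG μ γ).toNNReal else 0) :
    LocalMartingale μ γ
      (fun (t : ℝ≥0) (ω : Ω) =>
        A t ω - if (t : ℝ≥0∞) < γ ω then 0 else V ω) := by
  subst hA
  have hJ : IsJumpMean μ γ V K :=
    ⟨hK1, fun t ht => (integrable_indicator_iff (measurableSet_le hγ measurable_const)).1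
      (hVint t ht), hK⟩
  have hΛ := isCompensatorFn_jumpCompensatorFn hγ hpos hK1 hFmeas hF hFB
  convert localMartingale_compensatedJump hγ hV hJ hΛ using 3 with t ω
  simp only [compensatedJump, singleJump, jumpCompensatorFn, coe_toNNReal_coe_inf, le_inf_iff,
    and_comm (a := tG μ γ ≤ γ ω)]

end WithMeasurableSpace

end SingleJump
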